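/- For the Cantor ternary set C and any constant s > 2, if the positive even integer k satisfies k ≥ 2^{s/2 + 1}·⌈((s+3)/(s-2))^{s/2 - 1}·((5s+6)/(5s-6)) + 1⌉, then for every choice of positive integers a₁,…,a_k with a_{2i-1} + a_{2i} = s for all i, one has [0, k/2] = { ∑_{i=1}^{k/2} x_{2i-1}^{a_{2i-1}} x_{2i}^{a_{2i}} : x₁,…,x_k ∈ C }. -/

import Mathlib

/-- The `n`-th stage of the Cantor construction with ratio `r`:
`C_0 = [0,1]`, `C_{n+1} = f₀(C_n) ∪ f₁(C_n)` with `f₀ x = r x`, `f₁ x = r x + (1-r)`. -/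
def preCantorR (r : ℝ) : ℕ → Set ℝ
  | 0 => Set.Icc 0 1
  | n + 1 =>
      (fun x => r * x) '' preCantorR r n ∪ (fun x => r * x + (1 - r)) '' preCantorR r n

/-- The generalized Cantor set with contraction ratio `r`. -/
def cantorSetR (r : ℝ) : Set ℝ := ⋂ n, preCantorR r n

/-- The classical Cantor ternary set. -/
def cantorTernary : Set ℝ := cantorSetR (1/3)

/-- `pairSumVec a m x = ∑_{i=1}^{m} x_{2i-1}^{a_{2i-1}} x_{2i}^{a_{2i}}` (0-indexed),
i.e. the non-diagonal form `f_{k,\vec a}` with `k = 2m`. -/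
def pairSumVec (a : ℕ → ℕ) (m : ℕ) (x : ℕ → ℝ) : ℝ :=
  ∑ i ∈ Finset.range m, x (2 * i) ^ a (2 * i) * x (2 * i + 1) ^ a (2 * i + 1)

/-- The image `f_{k,\vec a}(S^k)` with `k = 2m`. -/
def imageOnVec (a : ℕ → ℕ) (m : ℕ) (S : Set ℝ) : Set ℝ :=
  {y | ∃ x : ℕ → ℝ, (∀ i, x i ∈ S) ∧ y = pairSumVec a m x}

section GapLemma

/-- Two open intervals, given by their endpoints, are separated by at least `K⁻¹` times the length
of the shorter one, the first lying to the left of the second. -/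
def GapBefore (K : ℝ) (g g' : ℝ × ℝ) : Prop :=
  g.2 ≤ g'.1 ∧ min (g.2 - g.1) (g'.2 - g'.1) ≤ K * (g'.1 - g.2)

/-- Newhouse-type gap lemma: if the gaps removed from each of the intervals `[p i, q i]` are, up to
the factor `K ≤ card ι - 1`, no longer than the bridges next to them, then the sum of the remaining
sets is the full interval `[∑ p i, ∑ q i]`. -/
theorem exists_sum_eq_of_gaps {ι : Type*} [Fintype ι] [DecidableEq ι] {K : ℝ} (hK : 0 < K)
    (hcard : K + 1 ≤ Fintype.card ι) (t : ℝ) (N : ℕ) (p q : ι → ℝ) (Γ : ι → Finset (ℝ × ℝ))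
    (hN : ∑ i, (Γ i).card ≤ N) (hpq : ∀ i, p i ≤ q i)
    (hpt : ∑ i, p i ≤ t) (htq : t ≤ ∑ i, q i)
    (hgap : ∀ i, ∀ g ∈ Γ i, g.1 < g.2 ∧ p i ≤ g.1 ∧ g.2 ≤ q i ∧
      g.2 - g.1 ≤ K * (g.1 - p i) ∧ g.2 - g.1 ≤ K * (q i - g.2))
    (hsep : ∀ i, ∀ g ∈ Γ i, ∀ g' ∈ Γ i, g ≠ g' → GapBefore K g g' ∨ GapBefore K g' g)
    (hlen : ∀ i j, ∀ g ∈ Γ j, g.2 - g.1 ≤ K * (q i - p i)) :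
    ∃ z : ι → ℝ, ∑ i, z i = t ∧
      ∀ i, z i ∈ Set.Icc (p i) (q i) ∧ ∀ g ∈ Γ i, z i ∉ Set.Ioo g.1 g.2 := by
  induction N generalizing p q Γ with
  | zero =>
    have hempty : ∀ i, Γ i = ∅ := by simpa using hN
    have hcont : Continuous fun c : ℝ => ∑ i, (p i + c * (q i - p i)) := by fun_prop
    obtain ⟨c, ⟨hc0, hc1⟩, hc⟩ := intermediate_value_Icc zero_le_one hcont.continuousOn
      (show t ∈ _ from ⟨by simpa using hpt, by simpa using htq⟩)
    refine ⟨fun i => p i + c * (q i - p i), hc, fun i => ⟨⟨?_, ?_⟩, by simp [hempty]⟩⟩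
    · nlinarith [hpq i]
    · nlinarith [hpq i]
  | succ N ih =>
    by_cases hempty : ∀ i, Γ i = ∅
    · exact ih p q Γ (by simp [hempty]) hpq hpt htq hgap hsep hlen
    obtain ⟨j, g, hg, hmax⟩ : ∃ j, ∃ g ∈ Γ j, ∀ l, ∀ g' ∈ Γ l, g'.2 - g'.1 ≤ g.2 - g.1 := by
      have hne : (Finset.univ.sigma Γ).Nonempty := by
        push Not at hempty
        obtain ⟨i, g, hg⟩ := hempty
        exact ⟨⟨i, g⟩, by simpa using hg⟩
      obtain ⟨⟨j, g⟩, hg, hmax⟩ :=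
        Finset.exists_max_image _ (fun x : (_ : ι) × (ℝ × ℝ) => x.2.2 - x.2.1) hne
      exact ⟨j, g, by simpa using hg, fun l g' hg' => hmax ⟨l, g'⟩ (by simpa using hg')⟩
    obtain ⟨hlt, hpg, hgq, hKp, hKq⟩ := hgap j g hg
    -- the other intervals are long enough to bridge the largest gap
    have hbridge : g.2 - g.1 ≤ ∑ i ∈ Finset.univ.erase j, (q i - p i) := by
      have h1 : ∑ _i ∈ Finset.univ.erase j, (g.2 - g.1)
          ≤ ∑ i ∈ Finset.univ.erase j, K * (q i - p i) :=
        Finset.sum_le_sum fun i _ => hlen i j g hg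
      rw [Finset.sum_const, Finset.card_erase_of_mem (Finset.mem_univ j), Finset.card_univ,
        nsmul_eq_mul, ← Finset.mul_sum,
        Nat.cast_sub (Fintype.card_pos_iff.mpr ⟨j⟩)] at h1
      push_cast at h1
      refine le_of_mul_le_mul_left (le_trans ?_ h1) hK
      exact mul_le_mul_of_nonneg_right (by linarith) (by linarith)
    -- restricting the `j`-th interval to one of the two bridges adjacent to the largest gap
    have restrict : ∀ (p' q' : ℝ) (Δ : Finset (ℝ × ℝ)), Δ ⊆ (Γ j).erase g →
        p j ≤ p' → p' ≤ q' → q' ≤ q j → ∑ i, p i + (p' - p j) ≤ t → t ≤ ∑ i, q i - (q j - q') →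
        (∀ g' ∈ Δ, p' ≤ g'.1 ∧ g'.2 ≤ q' ∧
          g'.2 - g'.1 ≤ K * (g'.1 - p') ∧ g'.2 - g'.1 ≤ K * (q' - g'.2)) →
        g.2 - g.1 ≤ K * (q' - p') →
        (∀ x ∈ Set.Icc p' q', (∀ g' ∈ Δ, x ∉ Set.Ioo g'.1 g'.2) →
          ∀ g' ∈ Γ j, x ∉ Set.Ioo g'.1 g'.2) →
        ∃ z : ι → ℝ, ∑ i, z i = t ∧
          ∀ i, z i ∈ Set.Icc (p i) (q i) ∧ ∀ g ∈ Γ i, z i ∉ Set.Ioo g.1 g.2 := by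
      intro p' q' Δ hΔ hp' hpq' hq' hpt' htq' hgap' hlen' hback
      have hΔΓ : Δ ⊆ Γ j := hΔ.trans (Finset.erase_subset _ _)
      have hsub : ∀ i, Function.update Γ j Δ i ⊆ Γ i := by
        intro i
        rcases eq_or_ne i j with rfl | hij
        · simpa using hΔΓ
        · simp [hij]
      have hsum : ∀ (f : ι → ℝ) (c : ℝ), ∑ i, Function.update f j c i = ∑ i, f i + (c - f j) := by
        intro f c
        rw [Finset.sum_update_of_mem (Finset.mem_univ j),
          ← Finset.add_sum_erase _ f (Finset.mem_univ j), Finset.erase_eq]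
        ring
      have key := ih (Function.update p j p') (Function.update q j q')
        (Function.update Γ j Δ) ?_ ?_ ?_ ?_ ?_ ?_ ?_
      · obtain ⟨z, hz, hzm⟩ := key
        refine ⟨z, hz, fun i => ?_⟩
        have hi := hzm i
        rcases eq_or_ne i j with rfl | hij
        · simp only [Function.update_self] at hi
          exact ⟨⟨hp'.trans hi.1.1, hi.1.2.trans hq'⟩, hback _ hi.1 hi.2⟩
        · simpa [hij] using hi
      · have hlt' : ∑ i, (Function.update Γ j Δ i).card < ∑ i, (Γ i).card := by
          refine Finset.sum_lt_sum (fun i _ => Finset.card_le_card (hsub i))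
            ⟨j, Finset.mem_univ j, ?_⟩
          rw [Function.update_self]
          exact (Finset.card_le_card hΔ).trans_lt (Finset.card_erase_lt_of_mem hg)
        omega
      · intro i
        rcases eq_or_ne i j with rfl | hij
        · simpa using hpq'
        · simpa [hij] using hpq i
      · rw [hsum]; exact hpt'
      · rw [hsum]; linarith
      · intro i g' hg'
        rcases eq_or_ne i j with rfl | hij
        · simp only [Function.update_self] at hg' ⊢
          exact ⟨(hgap _ g' (hΔΓ hg')).1, hgap' g' hg'⟩
        · simp only [Function.update_of_ne hij] at hg' ⊢
          exact hgap i g' hg'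
      · exact fun i g₁ h₁ g₂ h₂ => hsep i g₁ (hsub i h₁) g₂ (hsub i h₂)
      · intro i l g' hg'
        have hg'' := hsub l hg'
        rcases eq_or_ne i j with rfl | hij
        · simp only [Function.update_self]
          exact (hmax l g' hg'').trans hlen'
        · simp only [Function.update_of_ne hij]
          exact hlen i l g' hg''
    have hsplit : ∑ i, q i - ∑ i, p i = (q j - p j) + ∑ i ∈ Finset.univ.erase j, (q i - p i) := by
      rw [← Finset.sum_sub_distrib, ← Finset.add_sum_erase _ _ (Finset.mem_univ j)]
    have hother : ∀ g' ∈ Γ j, g' ≠ g →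
        (g'.2 ≤ g.1 ∧ g'.2 - g'.1 ≤ K * (g.1 - g'.2)) ∨
        (g.2 ≤ g'.1 ∧ g'.2 - g'.1 ≤ K * (g'.1 - g.2)) := by
      intro g' hg' hne
      have hm := hmax j g' hg'
      rcases hsep j g' hg' g hg hne with ⟨h1, h2⟩ | ⟨h1, h2⟩
      · rw [min_eq_left hm] at h2
        exact Or.inl ⟨h1, h2⟩
      · rw [min_eq_right hm] at h2
        exact Or.inr ⟨h1, h2⟩
    rcases le_total t (∑ i, q i - (q j - g.1)) with ht | ht
    · refine restrict (p j) g.1 {g' ∈ (Γ j).erase g | g'.2 ≤ g.1} (Finset.filter_subset _ _) le_rfl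
        hpg (by linarith) (by linarith) ht ?_ hKp ?_
      · intro g' hg'
        simp only [Finset.mem_filter, Finset.mem_erase] at hg'
        obtain ⟨⟨hne, hg'⟩, hle⟩ := hg'
        have hb := hgap j g' hg'
        rcases hother g' hg' hne with h | h
        · exact ⟨hb.2.1, hle, hb.2.2.2.1, h.2⟩
        · linarith [h.1, hb.1]
      · rintro x ⟨hx1, hx2⟩ hx g' hg' hxg
        by_cases hne : g' = g
        · subst hne
          linarith [hxg.1]
        · rcases hother g' hg' hne with h | h
          · exact hx g' (by simp [hne, hg', h.1]) hxg
          · linarith [hxg.1, h.1]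
    · refine restrict g.2 (q j) {g' ∈ (Γ j).erase g | g.2 ≤ g'.1} (Finset.filter_subset _ _)
        (by linarith) hgq le_rfl (by linarith) (by linarith) ?_ hKq ?_
      · intro g' hg'
        simp only [Finset.mem_filter, Finset.mem_erase] at hg'
        obtain ⟨⟨hne, hg'⟩, hle⟩ := hg'
        have hb := hgap j g' hg'
        rcases hother g' hg' hne with h | h
        · linarith [h.1, hb.1]
        · exact ⟨hle, hb.2.2.1, h.2, hb.2.2.2.2⟩
      · rintro x ⟨hx1, hx2⟩ hx g' hg' hxg
        by_cases hne : g' = g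
        · subst hne
          linarith [hxg.2]
        · rcases hother g' hg' hne with h | h
          · linarith [hxg.2, h.1]
          · exact hx g' (by simp [hne, hg', h.1]) hxg

end GapLemma

section PowerEstimates

theorem pow_sub_pow_le_of_sub_le {u v w : ℝ} (hu : 0 ≤ u) (huv : u ≤ v) (h : v - u ≤ w - v)
    (a : ℕ) : v ^ a - u ^ a ≤ w ^ a - v ^ a := by
  induction a with
  | zero => simp
  | succ a ih =>
    have hv : 0 ≤ v := hu.trans huv
    have h1 : v * (v ^ a - u ^ a) ≤ w * (w ^ a - v ^ a) :=
      mul_le_mul (by linarith) ih (sub_nonneg.2 (pow_le_pow_left₀ hu huv a)) (by linarith)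
    have h2 : u ^ a * (v - u) ≤ v ^ a * (w - v) :=
      mul_le_mul (pow_le_pow_left₀ hu huv a) h (by linarith) (by positivity)
    rw [pow_succ, pow_succ, pow_succ]
    linarith

theorem pow_succ_sub_pow_succ_le {w x : ℝ} (hw : 0 ≤ w) (hwx : w ≤ x) (hx : x ≤ 2 * w) (a : ℕ) :
    x ^ (a + 1) - w ^ (a + 1) ≤ (2 ^ (a + 1) - 1) * ((x - w) * w ^ a) := by
  induction a with
  | zero => norm_num
  | succ a ih =>
    have h1 : x * (x ^ (a + 1) - w ^ (a + 1)) ≤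
        2 * w * ((2 ^ (a + 1) - 1) * ((x - w) * w ^ a)) :=
      mul_le_mul hx ih (sub_nonneg.2 (pow_le_pow_left₀ hw hwx _)) (by positivity)
    calc x ^ (a + 1 + 1) - w ^ (a + 1 + 1)
        = x * (x ^ (a + 1) - w ^ (a + 1)) + (x - w) * w ^ (a + 1) := by ring
      _ ≤ 2 * w * ((2 ^ (a + 1) - 1) * ((x - w) * w ^ a)) + (x - w) * w ^ (a + 1) := by gcongr
      _ = (2 ^ (a + 1 + 1) - 1) * ((x - w) * w ^ (a + 1)) := by ring

theorem pow_sub_pow_le_mul_of_sub_le {v w x : ℝ} (hv : 0 ≤ v) (hvw : v ≤ w) (hwx : w ≤ x)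
    (h : x - w ≤ w - v) (a : ℕ) : x ^ a - w ^ a ≤ (2 ^ a - 1) * (w ^ a - v ^ a) := by
  rcases a with _ | a
  · simp
  have hw : 0 ≤ w := hv.trans hvw
  have h2 : (1 : ℝ) ≤ 2 ^ (a + 1) := one_le_pow₀ (by norm_num)
  refine (pow_succ_sub_pow_succ_le hw hwx (by linarith) a).trans ?_
  refine mul_le_mul_of_nonneg_left ?_ (by linarith)
  have h3 : (x - w) * w ^ a ≤ (w - v) * w ^ a := mul_le_mul_of_nonneg_right h (by positivity)
  have h4 : v * v ^ a ≤ v * w ^ a := mul_le_mul_of_nonneg_left (pow_le_pow_left₀ hv hvw a) hv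
  rw [pow_succ, pow_succ]
  linarith

end PowerEstimates

section CantorGaps

open Classical in
/-- The endpoints of the gaps of `preCantorR (1/3) n`. -/
noncomputable def cantorGaps : ℕ → Finset (ℝ × ℝ)
  | 0 => ∅
  | n + 1 => insert (1 / 3, 2 / 3)
      ((cantorGaps n).image (fun g => (1 / 3 * g.1, 1 / 3 * g.2)) ∪
        (cantorGaps n).image (fun g => (1 / 3 * g.1 + 2 / 3, 1 / 3 * g.2 + 2 / 3)))

theorem mem_cantorGaps_succ {n : ℕ} {g : ℝ × ℝ} : g ∈ cantorGaps (n + 1) ↔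
    g = (1 / 3, 2 / 3) ∨ (∃ h ∈ cantorGaps n, (1 / 3 * h.1, 1 / 3 * h.2) = g) ∨
      ∃ h ∈ cantorGaps n, (1 / 3 * h.1 + 2 / 3, 1 / 3 * h.2 + 2 / 3) = g := by
  simp only [cantorGaps, Finset.mem_insert, Finset.mem_union, Finset.mem_image]

theorem cantorGaps_bounds {n : ℕ} {g : ℝ × ℝ} (hg : g ∈ cantorGaps n) :
    0 ≤ g.1 ∧ g.1 < g.2 ∧ g.2 ≤ 1 ∧ g.2 - g.1 ≤ g.1 ∧ g.2 - g.1 ≤ 1 - g.2 := by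
  induction n generalizing g with
  | zero => simp [cantorGaps] at hg
  | succ n ih =>
    rcases mem_cantorGaps_succ.1 hg with rfl | ⟨h, hh, rfl⟩ | ⟨h, hh, rfl⟩
    · norm_num
    all_goals
      obtain ⟨h1, h2, h3, h4, h5⟩ := ih hh
      refine ⟨?_, ?_, ?_, ?_, ?_⟩ <;> dsimp only <;> linarith

theorem cantorGaps_separated {n : ℕ} {g g' : ℝ × ℝ} (hg : g ∈ cantorGaps n)
    (hg' : g' ∈ cantorGaps n) (hne : g ≠ g') : GapBefore 1 g g' ∨ GapBefore 1 g' g := by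
  induction n generalizing g g' with
  | zero => simp [cantorGaps] at hg
  | succ n ih =>
    simp only [GapBefore, one_mul, min_le_iff] at ih ⊢
    rcases mem_cantorGaps_succ.1 hg with rfl | ⟨h, hh, rfl⟩ | ⟨h, hh, rfl⟩ <;>
      rcases mem_cantorGaps_succ.1 hg' with rfl | ⟨h', hh', rfl⟩ | ⟨h', hh', rfl⟩
    · exact absurd rfl hne
    · obtain ⟨h1, h2, h3, h4, h5⟩ := cantorGaps_bounds hh'
      right; dsimp only; exact ⟨by linarith, by left; linarith⟩
    · obtain ⟨h1, h2, h3, h4, h5⟩ := cantorGaps_bounds hh'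
      left; dsimp only; exact ⟨by linarith, by right; linarith⟩
    · obtain ⟨h1, h2, h3, h4, h5⟩ := cantorGaps_bounds hh
      left; dsimp only; exact ⟨by linarith, by left; linarith⟩
    · rcases ih hh hh' (fun e => hne (by rw [e])) with ⟨h1, h2 | h2⟩ | ⟨h1, h2 | h2⟩
      · left; dsimp only; exact ⟨by linarith, by left; linarith⟩
      · left; dsimp only; exact ⟨by linarith, by right; linarith⟩
      · right; dsimp only; exact ⟨by linarith, by left; linarith⟩
      · right; dsimp only; exact ⟨by linarith, by right; linarith⟩
    · obtain ⟨h1, h2, h3, h4, h5⟩ := cantorGaps_bounds hh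
      obtain ⟨h1', h2', h3', h4', h5'⟩ := cantorGaps_bounds hh'
      left; dsimp only; exact ⟨by linarith, by left; linarith⟩
    · obtain ⟨h1, h2, h3, h4, h5⟩ := cantorGaps_bounds hh
      right; dsimp only; exact ⟨by linarith, by right; linarith⟩
    · obtain ⟨h1, h2, h3, h4, h5⟩ := cantorGaps_bounds hh
      obtain ⟨h1', h2', h3', h4', h5'⟩ := cantorGaps_bounds hh'
      right; dsimp only; exact ⟨by linarith, by left; linarith⟩
    · rcases ih hh hh' (fun e => hne (by rw [e])) with ⟨h1, h2 | h2⟩ | ⟨h1, h2 | h2⟩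
      · left; dsimp only; exact ⟨by linarith, by left; linarith⟩
      · left; dsimp only; exact ⟨by linarith, by right; linarith⟩
      · right; dsimp only; exact ⟨by linarith, by left; linarith⟩
      · right; dsimp only; exact ⟨by linarith, by right; linarith⟩

theorem mem_preCantorR_of_notMem_gaps {n : ℕ} {x : ℝ} (hx : x ∈ Set.Icc (0 : ℝ) 1)
    (hgap : ∀ g ∈ cantorGaps n, x ∉ Set.Ioo g.1 g.2) : x ∈ preCantorR (1 / 3) n := by
  induction n generalizing x with
  | zero => exact hx
  | succ n ih =>
    obtain ⟨hx0, hx1⟩ := hx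
    have hmid := hgap (1 / 3, 2 / 3) (mem_cantorGaps_succ.2 (Or.inl rfl))
    rcases le_or_gt x (1 / 3) with h | h
    · refine Or.inl ⟨3 * x, ih ⟨by linarith, by linarith⟩ fun g hg hxg => ?_, by ring⟩
      exact hgap _ (mem_cantorGaps_succ.2 (Or.inr (Or.inl ⟨g, hg, rfl⟩)))
        ⟨by linarith [hxg.1], by linarith [hxg.2]⟩
    · have h' : 2 / 3 ≤ x := by
        by_contra! h'
        exact hmid ⟨h, h'⟩
      refine Or.inr ⟨3 * x - 2, ih ⟨by linarith, by linarith⟩ fun g hg hxg => ?_, by ring⟩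
      exact hgap _ (mem_cantorGaps_succ.2 (Or.inr (Or.inr ⟨g, hg, rfl⟩)))
        ⟨by linarith [hxg.1], by linarith [hxg.2]⟩

theorem isCompact_preCantorR (r : ℝ) (n : ℕ) : IsCompact (preCantorR r n) := by
  induction n with
  | zero => exact isCompact_Icc
  | succ n ih => exact (ih.image (by fun_prop)).union (ih.image (by fun_prop))

theorem preCantorR_succ_subset {r : ℝ} (hr0 : 0 ≤ r) (hr1 : r ≤ 1) (n : ℕ) :
    preCantorR r (n + 1) ⊆ preCantorR r n := by
  induction n with
  | zero =>
    rintro _ (⟨x, ⟨hx0, hx1⟩, rfl⟩ | ⟨x, ⟨hx0, hx1⟩, rfl⟩)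
    · exact ⟨by positivity, by dsimp only; nlinarith⟩
    · exact ⟨by dsimp only; nlinarith [mul_nonneg hr0 hx0], by dsimp only; nlinarith⟩
  | succ n ih => exact Set.union_subset_union (Set.image_mono ih) (Set.image_mono ih)

theorem one_mem_cantorSetR (r : ℝ) : 1 ∈ cantorSetR r := by
  refine Set.mem_iInter.2 fun n => ?_
  induction n with
  | zero => exact ⟨zero_le_one, le_rfl⟩
  | succ n ih => exact Or.inr ⟨1, ih, by ring⟩

theorem cantorSetR_subset_Icc (r : ℝ) : cantorSetR r ⊆ Set.Icc 0 1 :=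
  Set.iInter_subset (preCantorR r) 0

end CantorGaps

section SumsOfPowers

variable {ι : Type*} [Fintype ι]

theorem exists_sum_pow_eq_of_preCantor {A : ℕ} (hA : 0 < A) (hcard : 2 ^ A ≤ Fintype.card ι)
    (e : ι → ℕ) (he0 : ∀ i, 0 < e i) (heA : ∀ i, e i ≤ A) (n : ℕ) {t : ℝ}
    (ht : t ∈ Set.Icc (0 : ℝ) (Fintype.card ι)) :
    ∃ x : ι → ℝ, (∀ i, x i ∈ preCantorR (1 / 3) n) ∧ ∑ i, x i ^ e i = t := by
  classical
  have hK2 : (2 : ℝ) ≤ 2 ^ A := le_self_pow₀ (by norm_num) hA.ne'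
  have hKe : ∀ i, (2 : ℝ) ^ e i - 1 ≤ 2 ^ A - 1 := fun i =>
    sub_le_sub_right (pow_le_pow_right₀ (by norm_num) (heA i)) 1
  have upper : ∀ i, ∀ {u v w : ℝ}, 0 ≤ u → u ≤ v → v - u ≤ w - v →
      v ^ e i - u ^ e i ≤ (2 ^ A - 1) * (w ^ e i - v ^ e i) := by
    intro i u v w hu huv h
    have h1 := pow_sub_pow_le_of_sub_le hu huv h (e i)
    have h2 : v ^ e i ≤ w ^ e i := pow_le_pow_left₀ (hu.trans huv) (by linarith) _
    nlinarith
  have lower : ∀ i, ∀ {v w x : ℝ}, 0 ≤ v → v ≤ w → w ≤ x → x - w ≤ w - v →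
      x ^ e i - w ^ e i ≤ (2 ^ A - 1) * (w ^ e i - v ^ e i) := by
    intro i v w x hv hvw hwx h
    exact (pow_sub_pow_le_mul_of_sub_le hv hvw hwx h (e i)).trans
      (mul_le_mul_of_nonneg_right (hKe i) (sub_nonneg.2 (pow_le_pow_left₀ hv hvw _)))
  have before : ∀ i, ∀ g ∈ cantorGaps n, ∀ g' ∈ cantorGaps n, GapBefore 1 g g' →
      GapBefore (2 ^ A - 1) (g.1 ^ e i, g.2 ^ e i) (g'.1 ^ e i, g'.2 ^ e i) := by
    rintro i g hg g' hg' ⟨h1, h2⟩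
    obtain ⟨hb1, hb2, -⟩ := cantorGaps_bounds hg
    obtain ⟨-, hb2', -⟩ := cantorGaps_bounds hg'
    have hv : 0 ≤ g.2 := by linarith
    refine ⟨pow_le_pow_left₀ hv h1 _, ?_⟩
    rw [one_mul, min_le_iff] at h2
    rw [min_le_iff]
    exact h2.imp (upper i hb1 hb2.le) (lower i hv h1 hb2'.le)
  have key := exists_sum_eq_of_gaps (K := 2 ^ A - 1) (by linarith)
    (by rw [sub_add_cancel]; exact_mod_cast hcard) t _ (fun _ : ι => 0) (fun _ => 1)
    (fun i => (cantorGaps n).image fun g => (g.1 ^ e i, g.2 ^ e i)) le_rfl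
    (fun _ => zero_le_one) (by simpa using ht.1) (by simpa using ht.2) ?_ ?_ ?_
  · obtain ⟨z, hz, hzm⟩ := key
    have hroot : ∀ i, (z i ^ ((e i : ℝ)⁻¹)) ^ e i = z i := fun i =>
      Real.rpow_inv_natCast_pow (hzm i).1.1 (he0 i).ne'
    refine ⟨fun i => z i ^ ((e i : ℝ)⁻¹), fun i => ?_, by simp only [hroot, hz]⟩
    have hx0 : 0 ≤ z i ^ ((e i : ℝ)⁻¹) := Real.rpow_nonneg (hzm i).1.1 _
    refine mem_preCantorR_of_notMem_gaps
      ⟨hx0, Real.rpow_le_one (hzm i).1.1 (hzm i).1.2 (by positivity)⟩ fun g hg hxg => ?_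
    refine (hzm i).2 _ (Finset.mem_image_of_mem _ hg) ⟨?_, ?_⟩
    · rw [← hroot i]
      exact pow_lt_pow_left₀ hxg.1 (cantorGaps_bounds hg).1 (he0 i).ne'
    · rw [← hroot i]
      exact pow_lt_pow_left₀ hxg.2 hx0 (he0 i).ne'
  · intro i _ hγ
    obtain ⟨g, hg, rfl⟩ := Finset.mem_image.1 hγ
    obtain ⟨h1, h2, h3, h4, h5⟩ := cantorGaps_bounds hg
    refine ⟨pow_lt_pow_left₀ h2 h1 (he0 i).ne', by positivity,
      pow_le_one₀ (by linarith) h3, ?_, ?_⟩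
    · simpa [(he0 i).ne'] using lower i le_rfl h1 h2.le (by simpa using h4)
    · simpa using upper i h1 h2.le h5
  · intro i _ hγ _ hγ' hne
    obtain ⟨g, hg, rfl⟩ := Finset.mem_image.1 hγ
    obtain ⟨g', hg', rfl⟩ := Finset.mem_image.1 hγ'
    exact (cantorGaps_separated hg hg' fun h => hne (by rw [h])).imp
      (before i g hg g' hg') (before i g' hg' g hg)
  · intro _ j _ hγ
    obtain ⟨g, hg, rfl⟩ := Finset.mem_image.1 hγ
    obtain ⟨h1, h2, h3, h4, h5⟩ := cantorGaps_bounds hg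
    have hle : g.2 ^ e j ≤ 1 := pow_le_one₀ (by linarith) h3
    have hnn : 0 ≤ g.1 ^ e j := by positivity
    dsimp only
    linarith

theorem exists_sum_pow_eq_of_cantorTernary {A : ℕ} (hA : 0 < A) (hcard : 2 ^ A ≤ Fintype.card ι)
    (e : ι → ℕ) (he0 : ∀ i, 0 < e i) (heA : ∀ i, e i ≤ A) {t : ℝ}
    (ht : t ∈ Set.Icc (0 : ℝ) (Fintype.card ι)) :
    ∃ x : ι → ℝ, (∀ i, x i ∈ cantorTernary) ∧ ∑ i, x i ^ e i = t := by
  let S : ℕ → Set (ι → ℝ) := fun n =>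
    Set.univ.pi (fun _ => preCantorR (1 / 3) n) ∩ {x | ∑ i, x i ^ e i = t}
  have hclosed : IsClosed {x : ι → ℝ | ∑ i, x i ^ e i = t} :=
    isClosed_eq (by fun_prop) continuous_const
  have hcompact : ∀ n, IsCompact (S n) := fun n =>
    (isCompact_univ_pi fun _ => isCompact_preCantorR _ n).inter_right hclosed
  obtain ⟨x, hx⟩ := IsCompact.nonempty_iInter_of_sequence_nonempty_isCompact_isClosed S
    (fun n => Set.inter_subset_inter_left _
      (Set.pi_mono fun _ _ => preCantorR_succ_subset (by norm_num) (by norm_num) n))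
    (fun n => by
      obtain ⟨x, hx, hxt⟩ := exists_sum_pow_eq_of_preCantor hA hcard e he0 heA n ht
      exact ⟨x, fun i _ => hx i, hxt⟩)
    (hcompact 0) (fun n => (hcompact n).isClosed)
  rw [Set.mem_iInter] at hx
  exact ⟨x, fun i => Set.mem_iInter.2 fun n => (hx n).1 i (Set.mem_univ i), (hx 0).2⟩

end SumsOfPowers

theorem imageOnVec_subset_Icc (a : ℕ → ℕ) (m : ℕ) {S : Set ℝ} (hS : S ⊆ Set.Icc 0 1) :
    imageOnVec a m S ⊆ Set.Icc 0 (m : ℝ) := by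
  rintro _ ⟨x, hx, rfl⟩
  have hp0 : ∀ i, 0 ≤ x i ^ a i := fun i => pow_nonneg (hS (hx i)).1 _
  have hp1 : ∀ i, x i ^ a i ≤ 1 := fun i => pow_le_one₀ (hS (hx i)).1 (hS (hx i)).2
  refine ⟨Finset.sum_nonneg fun i _ => mul_nonneg (hp0 _) (hp0 _), ?_⟩
  calc pairSumVec a m x ≤ ∑ _i ∈ Finset.range m, (1 : ℝ) :=
        Finset.sum_le_sum fun i _ => mul_le_one₀ (hp1 _) (hp0 _) (hp1 _)
    _ = m := by simp

theorem Icc_subset_imageOnVec (a : ℕ → ℕ) (m A : ℕ) (hA : 0 < A) (hm : 2 ^ A ≤ m)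
    (hpos : ∀ i < m, 0 < a (2 * i) ∧ 0 < a (2 * i + 1))
    (hmin : ∀ i < m, min (a (2 * i)) (a (2 * i + 1)) ≤ A) :
    Set.Icc 0 (m : ℝ) ⊆ imageOnVec a m cantorTernary := by
  intro t ht
  obtain ⟨z, hz, hzt⟩ := exists_sum_pow_eq_of_cantorTernary (ι := Fin m) hA (by simpa using hm)
    (fun i => min (a (2 * i)) (a (2 * i + 1)))
    (fun i => lt_min (hpos i i.2).1 (hpos i i.2).2) (fun i => hmin i i.2) (by simpa using ht)
  let c : ℕ → ℕ := fun i => if a (2 * i) ≤ a (2 * i + 1) then 0 else 1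
  refine ⟨fun j => if h : j / 2 < m ∧ j % 2 = c (j / 2) then z ⟨j / 2, h.1⟩ else 1, fun j => ?_, ?_⟩
  · dsimp only
    split_ifs
    exacts [hz _, one_mem_cantorSetR _]
  · rw [← hzt, pairSumVec, Finset.sum_range]
    refine Finset.sum_congr rfl fun i _ => ?_
    have h1 : 2 * (i : ℕ) / 2 = i := by omega
    have h2 : (2 * (i : ℕ) + 1) / 2 = i := by omega
    have h3 : 2 * (i : ℕ) % 2 = 0 := by omega
    have h4 : (2 * (i : ℕ) + 1) % 2 = 1 := by omega
    rcases le_or_gt (a (2 * i)) (a (2 * i + 1)) with h | h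
    · simp [h1, h2, h3, h4, c, h]
    · simp [h1, h2, h3, h4, c, h.not_ge, h.le]

/-- Cantor ternary version of the main theorem: for `s > 2` and `k` even with
`k ≥ 2^{s/2+1}·⌈((s+3)/(s-2))^{s/2-1}·((5s+6)/(5s-6)) + 1⌉`, every choice of positive
exponents with `a_{2i-1} + a_{2i} = s` represents all of `[0, k/2]`. -/
theorem stmt_17 (s : ℕ) (hs : 2 < s) (k : ℕ) (hk : Even k) (hkpos : 0 < k)
    (hkge : (k : ℝ) ≥
      (2 : ℝ) ^ ((s : ℝ) / 2 + 1) *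
        (⌈(((s : ℝ) + 3) / ((s : ℝ) - 2)) ^ ((s : ℝ) / 2 - 1) *
            ((5 * (s : ℝ) + 6) / (5 * (s : ℝ) - 6)) + 1⌉ : ℤ)) :
    ∀ a : ℕ → ℕ, (∀ i < k, 0 < a i) → (∀ i < k / 2, a (2 * i) + a (2 * i + 1) = s) →
      Set.Icc (0 : ℝ) ((k : ℝ) / 2) = imageOnVec a (k / 2) cantorTernary := by
  intro a hpos hsum
  have hs' : (3 : ℝ) ≤ s := by exact_mod_cast hs
  have hcast : ((k / 2 : ℕ) : ℝ) = (k : ℝ) / 2 := Nat.cast_div_charZero hk.two_dvd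
  rw [← hcast]
  refine Set.Subset.antisymm ?_ (imageOnVec_subset_Icc a _ (cantorSetR_subset_Icc _))
  refine Icc_subset_imageOnVec a (k / 2) (s / 2) (by omega) ?_
    (fun i hi => ⟨hpos _ (by omega), hpos _ (by omega)⟩)
    (fun i hi => by have := hsum i hi; omega)
  have hceil : (1 : ℝ) ≤ (⌈(((s : ℝ) + 3) / ((s : ℝ) - 2)) ^ ((s : ℝ) / 2 - 1) *
      ((5 * (s : ℝ) + 6) / (5 * (s : ℝ) - 6)) + 1⌉ : ℤ) := by
    refine le_trans ?_ (Int.le_ceil _)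
    have h1 : 0 ≤ ((s : ℝ) + 3) / ((s : ℝ) - 2) := div_nonneg (by linarith) (by linarith)
    have h2 : 0 ≤ (5 * (s : ℝ) + 6) / (5 * (s : ℝ) - 6) := div_nonneg (by linarith) (by linarith)
    linarith [mul_nonneg (Real.rpow_nonneg h1 ((s : ℝ) / 2 - 1)) h2]
  have hexp : (2 : ℝ) ^ (s / 2 + 1) ≤ (2 : ℝ) ^ ((s : ℝ) / 2 + 1) := by
    rw [← Real.rpow_natCast]
    refine Real.rpow_le_rpow_of_exponent_le (by norm_num) ?_
    push_cast
    linarith [Nat.cast_div_le (α := ℝ) (m := s) (n := 2)]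
  have hk' : (2 : ℝ) ^ (s / 2 + 1) ≤ k :=
    hexp.trans ((le_mul_of_one_le_right (by positivity) hceil).trans hkge)
  have hk'' : 2 ^ (s / 2 + 1) ≤ k := by exact_mod_cast hk'
  rw [pow_succ] at hk''
  omega
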